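/- With T the time evolution of qP_IV, one has the identity T(f₀)·T(f₁)·T(f₂) = (a₀a₁a₂)²·f₀f₁f₂ in ℂ(a₀,a₁,a₂,f₀,f₁,f₂); that is, the product of the three rational functions aⱼa_{j+1}f_{j+1}·(1 + a_{j+2}f_{j+2} + a_{j+2}aⱼf_{j+2}fⱼ)/(1 + aⱼfⱼ + aⱼa_{j+1}fⱼf_{j+1}) over j = 0,1,2 (indices modulo 3) equals q²f₀f₁f₂ where q = a₀a₁a₂. Consequently, if f₀f₁f₂ = t², the evolution T is consistent with the q-shift t ↦ qt. -/

import Mathlib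

/-!
The invariance relation T(f₀)T(f₁)T(f₂) = q²f₀f₁f₂ (q = a₀a₁a₂) for the
discrete time evolution T of the fourth q-Painlevé equation qP_IV, an
identity in the rational function field L = ℂ(a₀,a₁,a₂,f₀,f₁,f₂).
-/

open MvPolynomial

noncomputable section

abbrev PolyQ := MvPolynomial (ZMod 3 ⊕ ZMod 3) ℂ

abbrev LQ := FractionRing PolyQ

/-- The multiplicative root parameters a₀, a₁, a₂. -/
def av (j : ZMod 3) : LQ := algebraMap PolyQ LQ (X (Sum.inl j))

/-- The dependent variables f₀, f₁, f₂. -/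
def fv (j : ZMod 3) : LQ := algebraMap PolyQ LQ (X (Sum.inr j))

/-- The images T(fⱼ) of the dependent variables under the time evolution of
qP_IV. -/
def Tf (j : ZMod 3) : LQ :=
  av j * av (j + 1) * fv (j + 1) *
    (1 + av (j + 2) * fv (j + 2) + av (j + 2) * av j * fv (j + 2) * fv j) /
    (1 + av j * fv j + av j * av (j + 1) * fv j * fv (j + 1))

/-!
Write D_j for the denominator of T(f_j). Since j + 3 = j, the bracket in the numerator of T(f_j) is
D_{j+2}, so T(f_j) = a_j a_{j+1} f_{j+1} · D_{j+2} / D_j. In the product over the cyclic index the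
shifts disappear: the D's cancel, each a_j occurs twice and each f_j once. Cancelling requires
D_j ≠ 0, which holds for indeterminates because D_j has constant term 1.
-/

lemma prod_comp_add_right {G M : Type*} [AddGroup G] [Fintype G] [CommMonoid M] (u : G → M)
    (k : G) : ∏ j, u (j + k) = ∏ j, u j :=
  Equiv.prod_comp (Equiv.addRight k) u

lemma prod_comp_add_right_div_self {G K : Type*} [AddGroup G] [Fintype G] [CommGroupWithZero K]
    {u : G → K} (hu : ∀ j, u j ≠ 0) (k : G) : ∏ j, u (j + k) / u j = 1 := by
  rw [Finset.prod_div_distrib, prod_comp_add_right,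
    div_self (Finset.prod_ne_zero_iff.2 fun j _ ↦ hu j)]

lemma prod_univ_zmod_three {M : Type*} [CommMonoid M] (u : ZMod 3 → M) :
    ∏ j, u j = u 0 * u 1 * u 2 :=
  Fin.prod_univ_three u

namespace QPIV

/-- The denominator of the `j`-th component of the qP_IV evolution with parameters `a` and variables
`f`. It is defined over any commutative semiring, so that it can be evaluated in a polynomial ring
as well as in its fraction field. -/
def denominator {R : Type*} [CommSemiring R] (a f : ZMod 3 → R) (j : ZMod 3) : R :=
  1 + a j * f j + a j * a (j + 1) * f j * f (j + 1)

/-- The `j`-th component of the qP_IV evolution applied to values `f` with parameters `a`. As the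
formula has no subtraction, it makes sense over any semifield; it takes the junk value `0` where
`denominator a f j = 0`. -/
def evolution {K : Type*} [Semifield K] (a f : ZMod 3 → K) (j : ZMod 3) : K :=
  a j * a (j + 1) * f (j + 1) *
    (1 + a (j + 2) * f (j + 2) + a (j + 2) * a j * f (j + 2) * f j) /
    (1 + a j * f j + a j * a (j + 1) * f j * f (j + 1))

lemma map_denominator {R S : Type*} [CommSemiring R] [CommSemiring S] (φ : R →+* S)
    (a f : ZMod 3 → R) (j : ZMod 3) :
    φ (denominator a f j) = denominator (φ ∘ a) (φ ∘ f) j := by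
  simp only [denominator, map_add, map_mul, map_one, Function.comp_apply]

lemma denominator_X_ne_zero {σ R : Type*} [CommSemiring R] [Nontrivial R] (a f : ZMod 3 → σ)
    (j : ZMod 3) : denominator (X ∘ a : ZMod 3 → MvPolynomial σ R) (X ∘ f) j ≠ 0 := by
  apply ne_zero_of_map (f := constantCoeff)
  simp [denominator]

lemma denominator_av_fv_ne_zero (j : ZMod 3) : denominator av fv j ≠ 0 := by
  have h := (map_ne_zero_iff (algebraMap PolyQ LQ) (IsFractionRing.injective PolyQ LQ)).2
    (denominator_X_ne_zero Sum.inl Sum.inr j)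
  rwa [map_denominator] at h

lemma evolution_eq_mul_denominator_div {K : Type*} [Semifield K] (a f : ZMod 3 → K)
    (j : ZMod 3) :
    evolution a f j =
      a j * a (j + 1) * f (j + 1) * (denominator a f (j + 2) / denominator a f j) := by
  have add_two_add_one : j + 2 + 1 = j := by revert j; decide
  simp only [evolution, denominator, add_two_add_one, mul_div_assoc]

lemma Tf_eq_evolution (j : ZMod 3) : Tf j = evolution av fv j :=
  rfl

end QPIV

theorem qPIV_product_identity_general {K : Type*} [Semifield K] {a f : ZMod 3 → K}
    (hD : ∀ j, QPIV.denominator a f j ≠ 0) :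
    ∏ j, QPIV.evolution a f j = (∏ j, a j) ^ 2 * ∏ j, f j := by
  simp only [QPIV.evolution_eq_mul_denominator_div, Finset.prod_mul_distrib,
    prod_comp_add_right_div_self hD, prod_comp_add_right, mul_one, sq]

/-- T(f₀)·T(f₁)·T(f₂) = (a₀a₁a₂)²·f₀f₁f₂, so that with
f₀f₁f₂ = t² the time evolution of qP_IV is consistent with the q-shift
t ↦ qt, q = a₀a₁a₂. -/
theorem qPIV_product_identity :
    Tf 0 * Tf 1 * Tf 2 = (av 0 * av 1 * av 2) ^ 2 * (fv 0 * fv 1 * fv 2) := by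
  simpa only [QPIV.Tf_eq_evolution, prod_univ_zmod_three] using
    qPIV_product_identity_general QPIV.denominator_av_fv_ne_zero

end
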